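/- Let K be a number field, G = G_m^t × A with A an abelian variety over K, and P = (P_T, P_A) ∈ G(K). Suppose P_T ∈ (O_{K,S}^×)^t for a finite set of places S. Then G(K) ∩ (End_K(G)·P)_div is contained in (O_{K,S}^×)^t × A(K), hence is a finitely generated abelian group, and the quotient (G(K) ∩ (End_K(G)·P)_div)/(End_K(G)·P) is finite. -/

import Mathlib

open IsDedekindDomain

/-- The division closure of an additive subgroup. -/
def AddSubgroup.divClosure {G : Type*} [AddCommGroup G] (Γ : AddSubgroup G) : AddSubgroup G where
  carrier := {x : G | ∃ n : ℕ, 0 < n ∧ n • x ∈ Γ}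
  zero_mem' := ⟨1, one_pos, by simpa using Γ.zero_mem⟩
  add_mem' := by
    rintro a b ⟨n, hn, ha⟩ ⟨m, hm, hb⟩
    refine ⟨n * m, Nat.mul_pos hn hm, ?_⟩
    have h1 : (n * m) • a ∈ Γ := by
      rw [mul_comm, mul_smul]; exact Γ.nsmul_mem ha m
    have h2 : (n * m) • b ∈ Γ := by
      rw [mul_smul]; exact Γ.nsmul_mem hb n
    rw [smul_add]; exact Γ.add_mem h1 h2
  neg_mem' := by
    rintro a ⟨n, hn, ha⟩
    exact ⟨n, hn, by rw [smul_neg]; exact Γ.neg_mem ha⟩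

/-!
The `S`-units form a finitely generated subgroup of `Kˣ` (the valuations at the places of `S` map
them to `ℤ ^ S` with kernel the units of the ring of integers), and a saturated one: if `x ^ n` has
valuation `1`, so has `x`. Hence `U = (S-units)^t × A(K)` is finitely generated, and a point of
`G(K)` with a positive multiple in `U` lies in `U`. As `End_K(G)·P ⊆ U`, its division closure in
`G(K)` is a subgroup of `U`; modulo `End_K(G)·P` it is finitely generated and torsion, so finite.
-/

section FiniteGeneration

theorem addSubgroup_fg_of_le {G : Type*} [AddCommGroup G] {H U : AddSubgroup G} (hHU : H ≤ U)
    (hU : U.FG) : H.FG := by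
  have : IsNoetherian ℤ (AddSubgroup.toIntSubmodule U) :=
    isNoetherian_of_fg_of_noetherian _ ((Submodule.fg_iff_addSubgroup_fg _).mpr hU)
  exact (Submodule.fg_iff_addSubgroup_fg _).mp
    (isNoetherian_submodule.mp this (AddSubgroup.toIntSubmodule H) hHU)

theorem subgroup_fg_of_fg_inf_ker {G A : Type*} [CommGroup G] [CommGroup A] [Group.FG A]
    (f : G →* A) {N : Subgroup G} (hN : (N ⊓ f.ker).FG) : N.FG := by
  have : Module.Finite ℤ (Additive A) := Module.Finite.iff_addGroup_fg.mpr inferInstance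
  have hker : (AddSubgroup.toIntSubmodule (N ⊓ f.ker).toAddSubgroup).FG :=
    (Submodule.fg_iff_addSubgroup_fg _).mpr ((Subgroup.fg_iff_add_fg _).mp hN)
  exact (Subgroup.fg_iff_add_fg N).mpr <|
    (Submodule.fg_iff_addSubgroup_fg (AddSubgroup.toIntSubmodule N.toAddSubgroup)).mp <|
      Submodule.fg_of_fg_map_of_fg_inf_ker (MonoidHom.toAdditive f).toIntLinearMap
        (IsNoetherian.noetherian _) hker

end FiniteGeneration

section DivisionClosure

variable {G : Type*} [AddCommGroup G]

theorem divClosure_mono {Γ Δ : AddSubgroup G} (h : Γ ≤ Δ) : Γ.divClosure ≤ Δ.divClosure :=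
  fun _ ⟨n, hn, hx⟩ => ⟨n, hn, h hx⟩

theorem finite_quotient_of_le_divClosure {Γ H : AddSubgroup G} (hH : H.FG)
    (hle : H ≤ Γ.divClosure) : Finite (H ⧸ Γ.addSubgroupOf H) := by
  have : AddGroup.FG H := (AddGroup.fg_iff_addSubgroup_fg H).mpr hH
  refine AddCommGroup.finite_of_fg_isAddTorsion _ fun q => ?_
  obtain ⟨x, rfl⟩ := QuotientAddGroup.mk_surjective q
  obtain ⟨n, hn, hnx⟩ := hle x.2
  refine isOfFinAddOrder_iff_nsmul_eq_zero.mpr ⟨n, hn, ?_⟩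
  rwa [← QuotientAddGroup.mk_nsmul, QuotientAddGroup.eq_zero_iff]

end DivisionClosure

section SUnits

variable {R : Type*} [CommRing R] [IsDedekindDomain R] (S : Set (HeightOneSpectrum R))
  (K : Type*) [Field K] [Algebra R K] [IsFractionRing R K]

theorem powSaturated_unit : (S.unit K).PowSaturated := by
  refine fun n x hx => or_iff_not_imp_left.mpr fun hn v hv => ?_
  have hpow : v.valuation K (x : K) ^ n = 1 := by simpa using hx v hv
  exact (pow_eq_one_iff.mp hpow).resolve_right hn

variable (R) in
theorem unit_empty :
    (∅ : Set (HeightOneSpectrum R)).unit K = (Units.map (algebraMap R K : R →* K)).range := by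
  ext x
  constructor
  · intro hx
    have hv (v : HeightOneSpectrum R) : v.valuation K (x : K) = 1 := hx v (Set.notMem_empty v)
    obtain ⟨a, ha⟩ :=
      HeightOneSpectrum.mem_integers_of_valuation_le_one K (x : K) fun v => (hv v).le
    obtain ⟨b, hb⟩ :=
      HeightOneSpectrum.mem_integers_of_valuation_le_one (R := R) K ((x⁻¹ : Kˣ) : K)
        fun v => by simp [hv v]
    have hab : a * b = 1 := by
      apply FaithfulSMul.algebraMap_injective R K
      rw [map_mul, ha, hb, map_one, Units.mul_inv]
    exact ⟨⟨a, b, hab, mul_comm a b ▸ hab⟩, Units.ext ha⟩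
  · rintro ⟨y, rfl⟩ v -
    rw [← HeightOneSpectrum.valuationOfNeZero_eq, HeightOneSpectrum.valuation_of_unit_eq,
      WithZero.coe_one]

/-- The homomorphism from `Kˣ` to `ℤ ^ S` (written multiplicatively) given by the valuations at the
places in `S`; on the `S`-units its kernel is the unit group of `R`. -/
noncomputable def valuationsAt : Kˣ →* (S → Multiplicative ℤ) :=
  MonoidHom.pi fun v => v.1.valuationOfNeZero

theorem unit_inf_ker_valuationsAt :
    S.unit K ⊓ (valuationsAt S K).ker = (∅ : Set (HeightOneSpectrum R)).unit K := by
  ext x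
  have mem_ker : x ∈ (valuationsAt S K).ker ↔ ∀ v ∈ S, v.valuation K (x : K) = 1 := by
    refine funext_iff.trans (Subtype.forall.trans (forall₂_congr fun v _ => ?_))
    rw [← HeightOneSpectrum.valuationOfNeZero_eq, ← WithZero.coe_one, WithZero.coe_inj]
    rfl
  rw [Subgroup.mem_inf, mem_ker]
  constructor
  · rintro ⟨hunit, hker⟩ v -
    exact (em (v ∈ S)).elim (hker v) (hunit v)
  · exact fun hx =>
      ⟨fun v _ => hx v (Set.notMem_empty v), fun v _ => hx v (Set.notMem_empty v)⟩

variable {S} in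
theorem unit_fg [Monoid.FG Rˣ] (hS : S.Finite) : (S.unit K).FG := by
  have : Finite S := hS
  have : Group.FG Rˣ := Group.fg_iff_monoid_fg.mpr inferInstance
  refine subgroup_fg_of_fg_inf_ker (valuationsAt S K) ?_
  rw [unit_inf_ker_valuationsAt, unit_empty, ← Group.fg_iff_subgroup_fg]
  infer_instance

end SUnits

section TorusProduct

variable (ι : Type*) {G H A : Type*} [CommGroup G] [CommGroup H] [AddCommGroup A]

/-- The subgroup `V ^ ι × B` of `H ^ ι × A`. With `H = K̄ˣ`, `A = A(K̄)` and `B = A(K)`, the choices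
`V = Kˣ` and `V = 𝒪_{K,S}ˣ` give `G(K)` and `(𝒪_{K,S}ˣ) ^ ι × A(K)`. -/
def torusProd (V : Subgroup H) (B : AddSubgroup A) : AddSubgroup (Additive (ι → H) × A) :=
  (Subgroup.pi Set.univ fun _ => V).toAddSubgroup.prod B

variable {ι}

theorem mem_torusProd {V : Subgroup H} {B : AddSubgroup A} {p : Additive (ι → H) × A} :
    p ∈ torusProd ι V B ↔ (∀ i, p.1.toMul i ∈ V) ∧ p.2 ∈ B :=
  and_congr_left' (forall_congr' fun _ => forall_prop_of_true trivial)

theorem torusProd_fg [Finite ι] {V : Subgroup H} {B : AddSubgroup A} (hV : V.FG) (hB : B.FG) :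
    (torusProd ι V B).FG :=
  ((Subgroup.fg_iff_add_fg _).mp (Subgroup.FG.pi fun _ => hV)).prod hB

theorem torusProd_range_inf_divClosure_le {V : Subgroup G} (hV : V.PowSaturated) {j : G →* H}
    (hj : Function.Injective j) (B : AddSubgroup A) :
    torusProd ι j.range B ⊓ (torusProd ι (V.map j) B).divClosure ≤ torusProd ι (V.map j) B := by
  rintro p ⟨hp, n, hn, hnp⟩
  obtain ⟨hrange, hB⟩ := mem_torusProd.mp hp
  refine mem_torusProd.mpr ⟨fun i => ?_, hB⟩
  obtain ⟨x, hx⟩ := hrange i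
  have hxn : j (x ^ n) ∈ V.map j := by
    rw [map_pow, hx]
    exact (mem_torusProd.mp hnp).1 i
  have hxV : x ∈ V := (hV ((Subgroup.mem_map_iff_mem hj).mp hxn)).resolve_left hn.ne'
  exact ⟨x, hxV, hx⟩

variable [Fintype ι] {E : Type*}

/-- The subgroup `End(𝔾ₘ ^ ι × A) · P`: an endomorphism is a pair of an integer matrix, acting on
the torus by monomials, and an endomorphism of `A` from the family `endA`. -/
def endOrbit (endA : E → A →+ A) (P : Additive (ι → H) × A) : AddSubgroup (Additive (ι → H) × A) :=
  AddSubgroup.closure {q | ∃ (a : Matrix ι ι ℤ) (e : E),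
    q = (Additive.ofMul (fun r => ∏ s, (Additive.toMul P.1 s) ^ (a r s)), endA e P.2)}

theorem endOrbit_le_torusProd {V : Subgroup H} {B : AddSubgroup A} {endA : E → A →+ A}
    (hendA : ∀ e, ∀ x ∈ B, endA e x ∈ B) {P : Additive (ι → H) × A} (hP : P ∈ torusProd ι V B) :
    endOrbit endA P ≤ torusProd ι V B := by
  obtain ⟨hPV, hPB⟩ := mem_torusProd.mp hP
  refine (AddSubgroup.closure_le _).mpr ?_
  rintro _ ⟨a, e, rfl⟩
  exact mem_torusProd.mpr
    ⟨fun r => V.prod_mem fun s _ => V.zpow_mem (hPV s) (a r s), hendA e _ hPB⟩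

end TorusProduct

theorem stmt18_general {R K ι H A E : Type*} [CommRing R] [IsDedekindDomain R] [Monoid.FG Rˣ]
    [Field K] [Algebra R K] [IsFractionRing R K] [Fintype ι] [CommGroup H] [AddCommGroup A]
    {S : Set (HeightOneSpectrum R)} (hS : S.Finite) {B : AddSubgroup A} (hB : B.FG)
    {endA : E → A →+ A} (hendA : ∀ e, ∀ x ∈ B, endA e x ∈ B)
    {j : Kˣ →* H} (hj : Function.Injective j) {P : Additive (ι → H) × A}
    (hPT : ∀ i, P.1.toMul i ∈ (S.unit K).map j) (hPA : P.2 ∈ B) :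
    (∀ p ∈ torusProd ι j.range B ⊓ (endOrbit endA P).divClosure,
      (∀ i, p.1.toMul i ∈ (S.unit K).map j) ∧ p.2 ∈ B) ∧
    AddGroup.FG (torusProd ι j.range B ⊓ (endOrbit endA P).divClosure : AddSubgroup _) ∧
    Finite ((torusProd ι j.range B ⊓ (endOrbit endA P).divClosure : AddSubgroup _) ⧸
      (endOrbit endA P).addSubgroupOf
        (torusProd ι j.range B ⊓ (endOrbit endA P).divClosure)) := by
  have hunits : ((S.unit K).map j).FG := by
    rw [Subgroup.fg_iff_submonoid_fg]
    exact ((Subgroup.fg_iff_submonoid_fg _).mp (unit_fg K hS)).map j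
  have horbit : endOrbit endA P ≤ torusProd ι ((S.unit K).map j) B :=
    endOrbit_le_torusProd hendA (mem_torusProd.mpr ⟨hPT, hPA⟩)
  have hle : torusProd ι j.range B ⊓ (endOrbit endA P).divClosure ≤
      torusProd ι ((S.unit K).map j) B :=
    (inf_le_inf_left _ (divClosure_mono horbit)).trans
      (torusProd_range_inf_divClosure_le (powSaturated_unit S K) hj B)
  have hfg := addSubgroup_fg_of_le hle (torusProd_fg hunits hB)
  exact ⟨fun p hp => mem_torusProd.mp (hle hp), (AddGroup.fg_iff_addSubgroup_fg _).mpr hfg,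
    finite_quotient_of_le_divClosure hfg inf_le_right⟩

/-- Lemma (quotient-finite-Rémond). Let `K` be a number field with algebraic closure `K̄`, and
let `G = 𝔾ₘ^t × A` with `A` an abelian variety over `K`. We model `G(K̄)` as
`M = Additive ((Fin t → K̄ˣ)) × AV`, where `AV` stands for `A(K̄)`; the subgroup `AK ≤ AV` is
`A(K)` (finitely generated, by the Mordell–Weil theorem), and `endA : E → (AV →+ AV)` is the
family of `K`-endomorphisms of `A` (they preserve `A(K)`). The `K`-endomorphisms of the torus
are given by integer matrices acting by `x ↦ (r ↦ ∏ s, x s ^ a r s)`. Let `P = (P_T, P_A) ∈ G(K)`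
with `P_T ∈ (𝒪_{K,S}^×)^t` for a finite set of places `S`. Then
`G(K) ∩ (End_K(G)·P)_div` is contained in `(𝒪_{K,S}^×)^t × A(K)`, hence is a finitely
generated abelian group, and the quotient `(G(K) ∩ (End_K(G)·P)_div)/(End_K(G)·P)` is finite. -/
theorem stmt18 {K : Type*} [Field K] [NumberField K] (t : ℕ)
    (S : Set (HeightOneSpectrum (NumberField.RingOfIntegers K))) (hS : S.Finite)
    (AV E : Type*) [AddCommGroup AV] (AK : AddSubgroup AV) (hMW : AddGroup.FG AK)
    (endA : E → (AV →+ AV)) (hendA : ∀ (e : E), ∀ x ∈ AK, endA e x ∈ AK)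
    (j : Kˣ →* (AlgebraicClosure K)ˣ)
    (hj : j = Units.map (algebraMap K (AlgebraicClosure K)).toMonoidHom)
    (GK : AddSubgroup (Additive (Fin t → (AlgebraicClosure K)ˣ) × AV))
    (hGK : GK = (Subgroup.toAddSubgroup (Subgroup.pi Set.univ fun _ => j.range)).prod AK)
    (P : Additive (Fin t → (AlgebraicClosure K)ˣ) × AV)
    (hPK : P ∈ GK)
    (hPT : ∀ i : Fin t, ∃ u ∈ S.unit K, j u = Additive.toMul P.1 i)
    (EndGP : AddSubgroup (Additive (Fin t → (AlgebraicClosure K)ˣ) × AV))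
    (hEndGP : EndGP = AddSubgroup.closure
      {q | ∃ (a : Matrix (Fin t) (Fin t) ℤ) (e : E),
        q = (Additive.ofMul (fun r => ∏ s, (Additive.toMul P.1 s) ^ (a r s)), endA e P.2)}) :
    (∀ p ∈ GK ⊓ EndGP.divClosure,
      (∀ i : Fin t, ∃ u ∈ S.unit K, j u = Additive.toMul p.1 i) ∧ p.2 ∈ AK) ∧
    AddGroup.FG (GK ⊓ EndGP.divClosure : AddSubgroup _) ∧
    Finite ((GK ⊓ EndGP.divClosure : AddSubgroup _) ⧸
      EndGP.addSubgroupOf (GK ⊓ EndGP.divClosure)) := by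
  subst hj hGK hEndGP
  exact stmt18_general hS ((AddGroup.fg_iff_addSubgroup_fg AK).mp hMW) hendA
    (Units.map_injective (algebraMap K (AlgebraicClosure K)).injective) hPT hPK.2
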